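/- Let F : 𝕋 → ℂ be absolutely continuous and let f = P[F] be its Poisson integral. Then for every z ∈ 𝔻, i z · conj(f_z̄(z)) equals the Cauchy-type integral of conj(Ḟ): i z conj(f_z̄(z)) = (1/(2πi)) ∫_𝕋 conj(Ḟ(w)) / (w − z) dw. -/

import Mathlib

open MeasureTheory Complex Metric Set Filter
open scoped Real Topology ENNReal

noncomputable section

/-- The Poisson kernel `P(z) = (1-|z|^2)/|1-z|^2`. -/
def poissonKer (z : ℂ) : ℝ := (1 - ‖z‖ ^ 2) / ‖1 - z‖ ^ 2

/-- The Poisson integral of a boundary function `F` defined on the unit circle. -/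
def poissonInt (F : ℂ → ℂ) (z : ℂ) : ℂ :=
  (1 / (2 * π)) * ∫ t in (0:ℝ)..(2 * π),
    (poissonKer (z * Complex.exp (-(t : ℂ) * Complex.I)) : ℂ) *
      F (Complex.exp ((t : ℂ) * Complex.I))

/-- The Poisson integral of a (2π-periodic) function of the angular variable. -/
def poissonIntR (φ : ℝ → ℂ) (z : ℂ) : ℂ :=
  (1 / (2 * π)) * ∫ t in (0:ℝ)..(2 * π),
    (poissonKer (z * Complex.exp (-(t : ℂ) * Complex.I)) : ℂ) * φ t

/-- The conjugate Poisson kernel `P̃(z) = Im((1+z)/(1-z))`. -/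
def conjPoissonKer (z : ℂ) : ℝ := ((1 + z) / (1 - z)).im

/-- The conjugate Poisson integral of a function of the angular variable. -/
def conjPoissonIntR (φ : ℝ → ℂ) (z : ℂ) : ℂ :=
  (1 / (2 * π)) * ∫ t in (0:ℝ)..(2 * π),
    (conjPoissonKer (z * Complex.exp (-(t : ℂ) * Complex.I)) : ℂ) * φ t

/-- Wirtinger derivative `f_z = (1/2)(∂ₓ - i ∂_y) f`. -/
def wdz (f : ℂ → ℂ) (z : ℂ) : ℂ :=
  (1 / 2) * (fderiv ℝ f z 1 - Complex.I * fderiv ℝ f z Complex.I)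

/-- Wirtinger derivative `f_z̄ = (1/2)(∂ₓ + i ∂_y) f`. -/
def wdzb (f : ℂ → ℂ) (z : ℂ) : ℂ :=
  (1 / 2) * (fderiv ℝ f z 1 + Complex.I * fderiv ℝ f z Complex.I)

/-- The angular derivative `f_θ(z) = i (z f_z(z) - z̄ f_z̄(z))`. -/
def fTheta (f : ℂ → ℂ) (z : ℂ) : ℂ :=
  Complex.I * (z * wdz f z - (starRingEnd ℂ) z * wdzb f z)

/-- The radial derivative multiplied by `r`: `r f_r(z) = z f_z(z) + z̄ f_z̄(z)`. -/
def rFr (f : ℂ → ℂ) (z : ℂ) : ℂ :=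
  z * wdz f z + (starRingEnd ℂ) z * wdzb f z

/-- `F : 𝕋 → ℂ` is absolutely continuous with angular derivative `Ḟ = Fd`,
i.e. `t ↦ F(e^{it})` is an indefinite integral of the (locally integrable,
2π-periodic) function `Fd`. -/
def IsACDeriv (F : ℂ → ℂ) (Fd : ℝ → ℂ) : Prop :=
  (∀ a b : ℝ, IntervalIntegrable Fd MeasureTheory.volume a b) ∧
  Function.Periodic Fd (2 * π) ∧
  ∀ t : ℝ, F (Complex.exp ((t : ℂ) * Complex.I)) = F 1 + ∫ s in (0:ℝ)..t, Fd s

/-- membership in `L^p(𝕋)`, identifying `𝕋` with `[0, 2π)`. -/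
def MemLpT (p : ℝ≥0∞) (φ : ℝ → ℂ) : Prop :=
  MeasureTheory.MemLp φ p (MeasureTheory.volume.restrict (Ioc (0:ℝ) (2 * π)))

/-- The integral mean `M_p(r, g)`. -/
def Mp (p : ℝ) (g : ℂ → ℂ) (r : ℝ) : ℝ :=
  ((1 / (2 * π)) * ∫ θ in (0:ℝ)..(2 * π),
      ‖g ((r : ℂ) * Complex.exp ((θ : ℂ) * Complex.I))‖ ^ p) ^ (1 / p)

/-- The `L^p(𝕋)` norm `((1/2π) ∫ |φ|^p)^{1/p}`. -/
def lpNormT (p : ℝ) (φ : ℝ → ℂ) : ℝ :=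
  ((1 / (2 * π)) * ∫ t in (0:ℝ)..(2 * π), ‖φ t‖ ^ p) ^ (1 / p)

/-- Membership in the analytic Hardy space `H^p(𝔻)` for `p ∈ [1, ∞)`. -/
def MemHp (p : ℝ) (g : ℂ → ℂ) : Prop :=
  DifferentiableOn ℂ g (ball (0:ℂ) 1) ∧ ∃ M : ℝ, ∀ r ∈ Ioo (0:ℝ) 1, Mp p g r ≤ M

/-- Membership in `H^∞(𝔻)`: bounded analytic functions on the unit disk. -/
def MemHinf (g : ℂ → ℂ) : Prop :=
  DifferentiableOn ℂ g (ball (0:ℂ) 1) ∧ ∃ M : ℝ, ∀ z ∈ ball (0:ℂ) 1, ‖g z‖ ≤ M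

/-- Harmonicity on the unit disk: `f` is C² with vanishing Laplacian. -/
def HarmonicOnD (f : ℂ → ℂ) : Prop :=
  ContDiffOn ℝ 2 f (ball (0:ℂ) 1) ∧
  ∀ z ∈ ball (0:ℂ) 1,
    fderiv ℝ (fun w => fderiv ℝ f w 1) z 1
      + fderiv ℝ (fun w => fderiv ℝ f w Complex.I) z Complex.I = 0

/-- Membership in the harmonic Hardy space `h^p(𝔻)` for `p ∈ [1, ∞)`. -/
def Memhp (p : ℝ) (g : ℂ → ℂ) : Prop :=
  HarmonicOnD g ∧ ∃ M : ℝ, ∀ r ∈ Ioo (0:ℝ) 1, Mp p g r ≤ M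

/-- Membership in `h^∞(𝔻)`: bounded harmonic functions on the unit disk. -/
def Memhinf (g : ℂ → ℂ) : Prop :=
  HarmonicOnD g ∧ ∃ M : ℝ, ∀ z ∈ ball (0:ℂ) 1, ‖g z‖ ≤ M

/-- `L` is the value of the principal-value Hilbert transform
`(1/2π) p.v. ∫ φ(t)/tan((θ-t)/2) dt` of (the 2π-periodic) `φ` at `θ`. -/
def IsPVHilbert (φ : ℝ → ℂ) (θ : ℝ) (L : ℂ) : Prop :=
  Filter.Tendsto
    (fun ε : ℝ => (1 / (2 * π)) *
      ∫ t in Ioo (θ - π) (θ + π) \ Ioo (θ - ε) (θ + ε),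
        φ t / (Real.tan ((θ - t) / 2) : ℂ))
    (nhdsWithin 0 (Ioi 0)) (nhds L)

/-!
Write `w = e^{it}` and `K(t, z) = w / (w - z)`. On the disk `P(z w̄) = K + conj K - 1`, so `P[F]` is
`C[F] + conj C[conj F]` up to a constant, where `C[φ](z) = (1/2π) ∫ φ K dt` is holomorphic. Hence
`conj (f_z̄) = C[conj F]'`. The kernel satisfies `∂ₜK = -i z ∂_zK`, so integration by parts over the
period turns `i z C[φ]'` into `C[φ']`; take `φ = conj F`.
-/

section AbsolutelyContinuous

variable {a b : ℝ}

lemma absolutelyContinuousOnInterval_of_dist_le {X Y : Type*} [PseudoMetricSpace X]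
    [PseudoMetricSpace Y] {f : ℝ → X} {g : ℝ → Y} (hg : AbsolutelyContinuousOnInterval g a b)
    (hfg : ∀ x ∈ uIcc a b, ∀ y ∈ uIcc a b, dist (f x) (f y) ≤ dist (g x) (g y)) :
    AbsolutelyContinuousOnInterval f a b := by
  rw [absolutelyContinuousOnInterval_iff] at hg ⊢
  intro ε hε
  obtain ⟨δ, hδ, hsum⟩ := hg ε hε
  refine ⟨δ, hδ, fun P hP hlen => (Finset.sum_le_sum fun i hi => ?_).trans_lt (hsum P hP hlen)⟩
  exact hfg _ (hP.1 i hi).1 _ (hP.1 i hi).2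

variable {E : Type*} [NormedAddCommGroup E] [NormedSpace ℝ E]

lemma absolutelyContinuousOnInterval_integral {f : ℝ → E} {c : ℝ}
    (hf : IntervalIntegrable f volume a b) (hc : c ∈ uIcc a b) :
    AbsolutelyContinuousOnInterval (fun x => ∫ t in c..x, f t) a b := by
  refine absolutelyContinuousOnInterval_of_dist_le
    (hf.norm.absolutelyContinuousOnInterval_intervalIntegral hc) fun x hx y hy => ?_
  have hcx : IntervalIntegrable f volume c x := hf.mono_set (uIcc_subset_uIcc hc hx)
  have hcy : IntervalIntegrable f volume c y := hf.mono_set (uIcc_subset_uIcc hc hy)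
  rw [dist_eq_norm, dist_eq_norm, intervalIntegral.integral_interval_sub_left hcx hcy,
    intervalIntegral.integral_interval_sub_left hcx.norm hcy.norm]
  exact intervalIntegral.norm_integral_le_abs_integral_norm

theorem integral_eq_sub_of_absolutelyContinuousOnInterval [CompleteSpace E] {f f' : ℝ → E}
    (hf : AbsolutelyContinuousOnInterval f a b)
    (hderiv : ∀ᵐ x, x ∈ uIcc a b → HasDerivAt f (f' x) x)
    (hint : IntervalIntegrable f' volume a b) :
    ∫ x in a..b, f' x = f b - f a := by
  have hac := hf.fun_sub (absolutelyContinuousOnInterval_integral hint left_mem_uIcc)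
  obtain ⟨C, hC⟩ := hac.const_of_ae_hasDerivAt_zero <| by
    filter_upwards [hderiv, hint.ae_hasDerivAt_integral] with x hfx hix hx
    simpa using (hfx hx).fun_sub (hix hx a left_mem_uIcc)
  have hends := (hC b right_mem_uIcc).trans (hC a left_mem_uIcc).symm
  rw [intervalIntegral.integral_same, sub_zero] at hends
  rw [← hends, sub_sub_cancel]

theorem integral_deriv_mul_add_eq_sub_of_absolutelyContinuousOnInterval {A : Type*}
    [NormedDivisionRing A] [NormedAlgebra ℝ A] [CompleteSpace A] {u u' v v' : ℝ → A}
    (hu : AbsolutelyContinuousOnInterval u a b) (hv : AbsolutelyContinuousOnInterval v a b)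
    (huderiv : ∀ᵐ x, x ∈ uIcc a b → HasDerivAt u (u' x) x)
    (hvderiv : ∀ᵐ x, x ∈ uIcc a b → HasDerivAt v (v' x) x)
    (hu' : IntervalIntegrable u' volume a b) (hv' : IntervalIntegrable v' volume a b) :
    ∫ x in a..b, (u' x * v x + u x * v' x) = u b * v b - u a * v a := by
  refine integral_eq_sub_of_absolutelyContinuousOnInterval (hu.fun_smul hv) ?_
    ((hu'.mul_continuousOn hv.continuousOn).add (hv'.continuousOn_mul hu.continuousOn))
  filter_upwards [huderiv, hvderiv] with x hux hvx hx
  exact (hux hx).mul (hvx hx)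

end AbsolutelyContinuous

lemma intervalIntegrable_conj {f : ℝ → ℂ} {μ : Measure ℝ} {a b : ℝ}
    (hf : IntervalIntegrable f μ a b) :
    IntervalIntegrable (fun t => (starRingEnd ℂ) (f t)) μ a b := by
  rw [intervalIntegrable_iff] at hf ⊢
  exact conjCLE.toContinuousLinearMap.integrable_comp hf

namespace IsACDeriv

variable {F : ℂ → ℂ} {Fd : ℝ → ℂ}

lemma conj (hF : IsACDeriv F Fd) :
    IsACDeriv (fun w => (starRingEnd ℂ) (F w)) fun t => (starRingEnd ℂ) (Fd t) := by
  obtain ⟨hint, hper, hprim⟩ := hF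
  refine ⟨fun a b => ?_, hper.comp _, fun t => ?_⟩
  · exact intervalIntegrable_conj (hint a b)
  · simp only [hprim, map_add, intervalIntegral.intervalIntegral_conj]

lemma comp_exp_eq (hF : IsACDeriv F Fd) :
    (fun t : ℝ => F (exp (t * I))) = fun t => F 1 + ∫ s in (0 : ℝ)..t, Fd s :=
  funext hF.2.2

lemma continuous_comp_exp (hF : IsACDeriv F Fd) : Continuous fun t : ℝ => F (exp (t * I)) := by
  rw [hF.comp_exp_eq]
  exact continuous_const.add (intervalIntegral.continuous_primitive hF.1 0)

lemma absolutelyContinuousOnInterval_comp_exp (hF : IsACDeriv F Fd) (b : ℝ) :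
    AbsolutelyContinuousOnInterval (fun t : ℝ => F (exp (t * I))) 0 b := by
  refine absolutelyContinuousOnInterval_of_dist_le
    (absolutelyContinuousOnInterval_integral (hF.1 0 b) left_mem_uIcc) fun x _ y _ => ?_
  rw [hF.2.2, hF.2.2, dist_add_left]

lemma ae_hasDerivAt_comp_exp (hF : IsACDeriv F Fd) (b : ℝ) :
    ∀ᵐ t : ℝ, t ∈ uIcc 0 b → HasDerivAt (fun t : ℝ => F (exp (t * I))) (Fd t) t := by
  rw [hF.comp_exp_eq]
  filter_upwards [(hF.1 0 b).ae_hasDerivAt_integral] with t ht hmem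
  exact (ht hmem 0 left_mem_uIcc).const_add (F 1)

end IsACDeriv

section CauchyKernel

/-- The Cauchy kernel `w / (w - z)` with `w = e^{it}`: the factor `w` absorbs the line element
`dw = i w dt`. -/
def cauchyKer (t : ℝ) (z : ℂ) : ℂ := exp (t * I) / (exp (t * I) - z)

/-- The derivative `w / (w - z)²`, with `w = e^{it}`, of `cauchyKer t` in `z`. -/
def cauchyKerDeriv (t : ℝ) (z : ℂ) : ℂ := exp (t * I) / (exp (t * I) - z) ^ 2

variable {t : ℝ} {z : ℂ}

lemma one_sub_norm_le_norm_exp_sub (t : ℝ) (z : ℂ) : 1 - ‖z‖ ≤ ‖exp (t * I) - z‖ := by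
  simpa only [norm_exp_ofReal_mul_I] using norm_sub_norm_le (exp (t * I)) z

lemma exp_sub_ne_zero (t : ℝ) (hz : ‖z‖ < 1) : exp (t * I) - z ≠ 0 :=
  norm_pos_iff.1 <| (sub_pos.2 hz).trans_le (one_sub_norm_le_norm_exp_sub t z)

lemma poissonKer_mul_exp_eq_poissonKernel (t : ℝ) (z : ℂ) :
    poissonKer (z * exp (-(t : ℂ) * I)) = poissonKernel 0 z (exp (t * I)) := by
  have hnorm : ‖exp (-(t : ℂ) * I)‖ = 1 := by
    simpa only [ofReal_neg] using norm_exp_ofReal_mul_I (-t)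
  have hrot : 1 - z * exp (-(t : ℂ) * I) = (exp (t * I) - z) * exp (-(t : ℂ) * I) := by
    rw [sub_mul, ← exp_add, neg_mul, add_neg_cancel, exp_zero]
  rw [poissonKer, poissonKernel, hrot, norm_mul, norm_mul, hnorm]
  simp only [mul_one, sub_zero, norm_exp_ofReal_mul_I, one_pow]

lemma poissonKer_mul_exp_eq_cauchyKer (h : exp (t * I) - z ≠ 0) :
    (poissonKer (z * exp (-(t : ℂ) * I)) : ℂ)
      = cauchyKer t z + (starRingEnd ℂ) (cauchyKer t z) - 1 := by
  have hherglotz : herglotzRieszKernel 0 z (exp (t * I)) = 2 * cauchyKer t z - 1 := by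
    rw [herglotzRieszKernel, cauchyKer, sub_zero, sub_zero]
    field_simp
    ring
  rw [poissonKer_mul_exp_eq_poissonKernel, poissonKernel_eq_re_herglotzRieszKernel,
    Function.comp_apply, hherglotz, add_conj]
  simp

lemma hasDerivAt_cauchyKer (h : exp (t * I) - z ≠ 0) :
    HasDerivAt (cauchyKer t) (cauchyKerDeriv t z) z := by
  refine ((hasDerivAt_const z (exp (t * I))).fun_div
    ((hasDerivAt_id' z).const_sub (exp (t * I))) h).congr_deriv ?_
  rw [cauchyKerDeriv]
  ring

lemma hasDerivAt_cauchyKer_angle (h : exp (t * I) - z ≠ 0) :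
    HasDerivAt (cauchyKer · z) (-I * z * cauchyKerDeriv t z) t := by
  have hexp : HasDerivAt (fun s : ℝ => exp (s * I)) (exp (t * I) * I) t := by
    simpa using (ofRealCLM.hasDerivAt (x := t).mul_const I).cexp
  refine (hexp.fun_div (hexp.sub_const z) h).congr_deriv ?_
  rw [cauchyKerDeriv]
  ring

lemma continuous_cauchyKer (hz : ‖z‖ < 1) : Continuous (cauchyKer · z) := by
  unfold cauchyKer
  exact Continuous.div (by fun_prop) (by fun_prop) fun t => exp_sub_ne_zero t hz

lemma continuous_cauchyKerDeriv (hz : ‖z‖ < 1) : Continuous (cauchyKerDeriv · z) := by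
  unfold cauchyKerDeriv
  exact Continuous.div (by fun_prop) (by fun_prop) fun t => pow_ne_zero 2 (exp_sub_ne_zero t hz)

lemma norm_cauchyKerDeriv_le {r : ℝ} (hr : r < 1) (hz : ‖z‖ ≤ r) :
    ‖cauchyKerDeriv t z‖ ≤ 1 / (1 - r) ^ 2 := by
  have hdist : 1 - r ≤ ‖exp (t * I) - z‖ :=
    (sub_le_sub_left hz 1).trans (one_sub_norm_le_norm_exp_sub t z)
  have : 0 < 1 - r := sub_pos.2 hr
  rw [cauchyKerDeriv, norm_div, norm_pow, norm_exp_ofReal_mul_I]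
  gcongr

lemma absolutelyContinuousOnInterval_cauchyKer (hz : ‖z‖ < 1) (a b : ℝ) :
    AbsolutelyContinuousOnInterval (cauchyKer · z) a b := by
  have hderiv : deriv (cauchyKer · z) = fun t => -I * z * cauchyKerDeriv t z :=
    funext fun t => (hasDerivAt_cauchyKer_angle (exp_sub_ne_zero t hz)).deriv
  have hdiff : Differentiable ℝ (cauchyKer · z) := fun t =>
    (hasDerivAt_cauchyKer_angle (exp_sub_ne_zero t hz)).differentiableAt
  have hC1 : ContDiff ℝ 1 (cauchyKer · z) :=
    contDiff_one_iff_deriv.2 ⟨hdiff, hderiv ▸ (continuous_cauchyKerDeriv hz).const_mul _⟩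
  exact hC1.contDiffOn.absolutelyContinuousOnInterval

end CauchyKernel

section CauchyTransform

/-- The Cauchy transform `C[φ](z) = (1/2πi) ∫_𝕋 φ(w) / (w - z) dw` of a function `φ` of the angular
variable, written with respect to `dt = dw / (i w)`. -/
def cauchyTransform (φ : ℝ → ℂ) (z : ℂ) : ℂ :=
  (1 / (2 * π)) * ∫ t in (0 : ℝ)..(2 * π), φ t * cauchyKer t z

variable {φ : ℝ → ℂ} {z : ℂ}

lemma cauchyTransform_eq_contourIntegral (φ : ℝ → ℂ) (z : ℂ) :
    cauchyTransform φ z = (1 / (2 * (π : ℂ) * I)) *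
      ∫ t in (0 : ℝ)..(2 * π), (φ t / (exp (t * I) - z)) * (I * exp (t * I)) := by
  have hline : ∀ t : ℝ, (φ t / (exp (t * I) - z)) * (I * exp (t * I)) = I * (φ t * cauchyKer t z) :=
    fun t => by rw [cauchyKer]; ring
  simp only [hline, intervalIntegral.integral_const_mul, cauchyTransform]
  field_simp

lemma conj_cauchyTransform (φ : ℝ → ℂ) (z : ℂ) :
    (starRingEnd ℂ) (cauchyTransform φ z) = (1 / (2 * π)) *
      ∫ t in (0 : ℝ)..(2 * π), (starRingEnd ℂ) (φ t) * (starRingEnd ℂ) (cauchyKer t z) := by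
  simp only [cauchyTransform, ← map_mul, intervalIntegral.intervalIntegral_conj]
  simp only [map_mul, map_div₀, map_one, conj_ofReal, conj_ofNat]

lemma hasDerivAt_cauchyTransform (hφ : IntervalIntegrable φ volume 0 (2 * π)) (hz : ‖z‖ < 1) :
    HasDerivAt (cauchyTransform φ)
      ((1 / (2 * π)) * ∫ t in (0 : ℝ)..(2 * π), φ t * cauchyKerDeriv t z) z := by
  obtain ⟨r, hzr, hr⟩ := exists_between hz
  have hball : ball (0 : ℂ) r ∈ 𝓝 z := isOpen_ball.mem_nhds (mem_ball_zero_iff.2 hzr)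
  have hφK : ∀ ζ : ℂ, ‖ζ‖ < 1 →
      IntervalIntegrable (fun t => φ t * cauchyKer t ζ) volume 0 (2 * π) :=
    fun ζ hζ => hφ.mul_continuousOn (continuous_cauchyKer hζ).continuousOn
  refine HasDerivAt.const_mul _
    (intervalIntegral.hasDerivAt_integral_of_dominated_loc_of_deriv_le
      (F' := fun ζ t => φ t * cauchyKerDeriv t ζ) (bound := fun t => ‖φ t‖ * (1 / (1 - r) ^ 2))
      hball ?_ (hφK z hz) ?_ ?_ (hφ.norm.mul_const _) ?_).2
  · filter_upwards [hball] with ζ hζ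
    exact (hφK ζ ((mem_ball_zero_iff.1 hζ).trans hr)).def'.aestronglyMeasurable
  · exact (hφ.mul_continuousOn
      (continuous_cauchyKerDeriv hz).continuousOn).def'.aestronglyMeasurable
  · refine .of_forall fun t _ ζ hζ => ?_
    rw [norm_mul]
    gcongr
    exact norm_cauchyKerDeriv_le hr (mem_ball_zero_iff.1 hζ).le
  · exact .of_forall fun t _ ζ hζ =>
      (hasDerivAt_cauchyKer (exp_sub_ne_zero t ((mem_ball_zero_iff.1 hζ).trans hr))).const_mul (φ t)

theorem IsACDeriv.mul_deriv_cauchyTransform {F : ℂ → ℂ} {Fd : ℝ → ℂ} (hF : IsACDeriv F Fd)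
    (hz : ‖z‖ < 1) :
    I * z * deriv (cauchyTransform fun t => F (exp (t * I))) z = cauchyTransform Fd z := by
  have hFcont := hF.continuous_comp_exp
  have hkerDeriv : Continuous fun t => -I * z * cauchyKerDeriv t z :=
    (continuous_cauchyKerDeriv hz).const_mul _
  have hparts := integral_deriv_mul_add_eq_sub_of_absolutelyContinuousOnInterval
    (hF.absolutelyContinuousOnInterval_comp_exp (2 * π))
    (absolutelyContinuousOnInterval_cauchyKer hz 0 (2 * π)) (hF.ae_hasDerivAt_comp_exp (2 * π))
    (.of_forall fun t _ => hasDerivAt_cauchyKer_angle (exp_sub_ne_zero t hz))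
    (hF.1 0 (2 * π)) (hkerDeriv.intervalIntegrable 0 (2 * π))
  have hclosed : exp (((2 * π : ℝ) : ℂ) * I) = exp (((0 : ℝ) : ℂ) * I) := by
    simp [exp_two_pi_mul_I]
  have hpull : ∀ t : ℝ, F (exp (t * I)) * (-I * z * cauchyKerDeriv t z)
      = -I * z * (F (exp (t * I)) * cauchyKerDeriv t z) := fun t => by ring
  rw [intervalIntegral.integral_add
      ((hF.1 0 (2 * π)).mul_continuousOn (continuous_cauchyKer hz).continuousOn)
      ((hFcont.fun_mul hkerDeriv).intervalIntegrable 0 (2 * π)), cauchyKer, cauchyKer, hclosed,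
    sub_self] at hparts
  simp only [hpull, intervalIntegral.integral_const_mul] at hparts
  rw [(hasDerivAt_cauchyTransform (hFcont.intervalIntegrable 0 (2 * π)) hz).deriv, cauchyTransform]
  linear_combination -(1 / (2 * π : ℂ)) * hparts

end CauchyTransform

section Wirtinger

lemma wdzb_congr_of_eventuallyEq {f g : ℂ → ℂ} {z : ℂ} (h : f =ᶠ[𝓝 z] g) :
    wdzb f z = wdzb g z := by
  rw [wdzb, wdzb, h.fderiv_eq]

lemma wdzb_add_conj {g h : ℂ → ℂ} {z : ℂ} (hg : DifferentiableAt ℂ g z)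
    (hh : DifferentiableAt ℂ h z) :
    wdzb (fun ζ => g ζ + (starRingEnd ℂ) (h ζ)) z = (starRingEnd ℂ) (deriv h z) := by
  have hg' := hg.hasDerivAt.hasFDerivAt.restrictScalars ℝ
  have hh' := (conjCLE.hasFDerivAt (x := h z)).comp z (hh.hasDerivAt.hasFDerivAt.restrictScalars ℝ)
  have hsum : HasFDerivAt (fun ζ => g ζ + (starRingEnd ℂ) (h ζ)) _ z := hg'.fun_add hh'
  have hdx : fderiv ℝ (fun ζ => g ζ + (starRingEnd ℂ) (h ζ)) z 1
      = deriv g z + (starRingEnd ℂ) (deriv h z) := by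
    simp [hsum.fderiv]
  have hdy : fderiv ℝ (fun ζ => g ζ + (starRingEnd ℂ) (h ζ)) z I
      = I * deriv g z - I * (starRingEnd ℂ) (deriv h z) := by
    simp [hsum.fderiv, sub_eq_add_neg]
  rw [wdzb, hdx, hdy]
  linear_combination (1 / 2 * (deriv g z - (starRingEnd ℂ) (deriv h z))) * I_sq

end Wirtinger

section PoissonIntegral

variable {F : ℂ → ℂ} {z : ℂ}

lemma poissonInt_eq_cauchyTransform
    (hF : IntervalIntegrable (fun t : ℝ => F (exp (t * I))) volume 0 (2 * π)) (hz : ‖z‖ < 1) :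
    poissonInt F z = cauchyTransform (fun t => F (exp (t * I))) z
      - (1 / (2 * π)) * (∫ t in (0 : ℝ)..(2 * π), F (exp (t * I)))
      + (starRingEnd ℂ) (cauchyTransform (fun t => (starRingEnd ℂ) (F (exp (t * I)))) z) := by
  have hK : ContinuousOn (cauchyKer · z) (uIcc 0 (2 * π)) := (continuous_cauchyKer hz).continuousOn
  have hKconj : ContinuousOn (fun t => (starRingEnd ℂ) (cauchyKer t z)) (uIcc 0 (2 * π)) :=
    continuous_conj.comp_continuousOn hK
  have hFK := hF.mul_continuousOn hK
  have hFconjK := hF.mul_continuousOn hKconj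
  have hker : ∀ t : ℝ, (poissonKer (z * exp (-(t : ℂ) * I)) : ℂ) * F (exp (t * I))
      = F (exp (t * I)) * cauchyKer t z - F (exp (t * I))
        + F (exp (t * I)) * (starRingEnd ℂ) (cauchyKer t z) := fun t => by
    rw [poissonKer_mul_exp_eq_cauchyKer (exp_sub_ne_zero t hz)]
    ring
  simp only [poissonInt, hker]
  rw [intervalIntegral.integral_add (hFK.sub hF) hFconjK, intervalIntegral.integral_sub hFK hF,
    conj_cauchyTransform, cauchyTransform]
  simp only [conj_conj, mul_add, mul_sub]

lemma conj_wdzb_poissonInt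
    (hF : IntervalIntegrable (fun t : ℝ => F (exp (t * I))) volume 0 (2 * π)) (hz : ‖z‖ < 1) :
    (starRingEnd ℂ) (wdzb (poissonInt F) z)
      = deriv (cauchyTransform fun t => (starRingEnd ℂ) (F (exp (t * I)))) z := by
  have hdecomp := eventuallyEq_of_mem (isOpen_ball.mem_nhds (mem_ball_zero_iff.2 hz))
    fun ζ hζ => poissonInt_eq_cauchyTransform hF (mem_ball_zero_iff.1 hζ)
  have hhol := (hasDerivAt_cauchyTransform hF hz).differentiableAt
  have hhol_conj :=
    (hasDerivAt_cauchyTransform (intervalIntegrable_conj hF) hz).differentiableAt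
  rw [wdzb_congr_of_eventuallyEq hdecomp, wdzb_add_conj (hhol.sub_const _) hhol_conj, conj_conj]

end PoissonIntegral

/-- For `F : 𝕋 → ℂ` absolutely continuous and `f = P[F]`, for every
`z ∈ 𝔻`, `i z conj(f_z̄(z))` equals the Cauchy-type integral of `conj Ḟ`:
`i z conj(f_z̄(z)) = (1/(2πi)) ∫_𝕋 conj(Ḟ(w))/(w-z) dw`. -/
theorem stmt8 (F : ℂ → ℂ) (Fd : ℝ → ℂ) (hF : IsACDeriv F Fd) :
    ∀ z ∈ ball (0:ℂ) 1,
      Complex.I * z * (starRingEnd ℂ) (wdzb (poissonInt F) z)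
        = (1 / (2 * (π : ℂ) * Complex.I)) *
            ∫ t in (0:ℝ)..(2 * π),
              ((starRingEnd ℂ) (Fd t) / (Complex.exp ((t : ℂ) * Complex.I) - z)) *
                (Complex.I * Complex.exp ((t : ℂ) * Complex.I)) := by
  intro z hz
  rw [mem_ball_zero_iff] at hz
  rw [conj_wdzb_poissonInt (hF.continuous_comp_exp.intervalIntegrable 0 (2 * π)) hz,
    hF.conj.mul_deriv_cauchyTransform hz, cauchyTransform_eq_contourIntegral]

end
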